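/- arXiv:1211.5789 — 4 statements merged into one kernel-verified Lean document; each statement's English description precedes it below -/
import Mathlib

section
/- The idempotent e' = 1 − aʳ*a is a full idempotent of A: the two-sided ideal generated by e' is all of A, i.e., A*e'*A = A (equivalently, 1 belongs to the two-sided ideal generated by e'). -/
/-- The idempotent `e' = 1 - aʳ*a` is a full idempotent of `A`: the two-sided ideal it
generates is all of `A`, i.e. `A*e'*A = A`; equivalently `1` belongs to the two-sided
ideal generated by `e'`, i.e. `1` is a finite sum of elements `y*e'*z`. -/
theorem one_sub_section_mul_is_full_idempotent (A : Type*) [Ring A] (e₀ e₁ a ar : A)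
    (he₀ : IsIdempotentElem e₀) (he₁ : IsIdempotentElem e₁)
    (h₀₁ : e₀ * e₁ = 0) (h₁₀ : e₁ * e₀ = 0)
    (ha : a = e₁ * a * e₀) (har : ar = e₀ * ar * e₁) (haar : a * ar = e₁) :
    (1 : A) ∈ TwoSidedIdeal.span {1 - ar * a} ∧
    ∃ (n : ℕ) (y z : Fin n → A), ∑ i, y i * (1 - ar * a) * z i = 1 := by
  have haa : a * a = 0 := by
    have h : a * a = e₁ * a * (e₀ * e₁) * a * e₀ := by
      conv_lhs => rw [ha]
      simp only [mul_assoc]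
    rw [h, h₀₁]; simp
  have hkey : 1 * (1 - ar * a) * 1 + ar * (1 - ar * a) * a = 1 := by
    have h : 1 * (1 - ar * a) * 1 + ar * (1 - ar * a) * a = 1 - ar * ar * (a * a) := by
      noncomm_ring
    rw [h, haa]; simp
  constructor
  · have hm : (1 - ar * a) ∈ TwoSidedIdeal.span {1 - ar * a} :=
      TwoSidedIdeal.subset_span (Set.mem_singleton _)
    have h2 := TwoSidedIdeal.add_mem _
      (TwoSidedIdeal.mul_mem_right _ _ 1 (TwoSidedIdeal.mul_mem_left _ 1 _ hm))
      (TwoSidedIdeal.mul_mem_right _ _ a (TwoSidedIdeal.mul_mem_left _ ar _ hm))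
    rwa [hkey] at h2
  · refine ⟨2, ![1, ar], ![1, a], ?_⟩
    rw [Fin.sum_univ_two]
    exact hkey
end

section
/- For every left A-module M: (1) e'M = {e'*m : m ∈ M} equals the kernel of left multiplication by a on M, i.e., e'M = {m ∈ M | a·m = 0}; and (2) the map m ↦ e'·m induces a well-defined isomorphism of abelian groups from the quotient M/(aʳ·M) onto {m ∈ M | a·m = 0}, where aʳ·M = {aʳ·m : m ∈ M}. -/
/-- The additive subgroup `c•M = {c • m : m ∈ M}` of a module `M`. -/
def smulRange {A : Type*} [Ring A] (c : A) (M : Type*) [AddCommGroup M] [Module A M] :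
    AddSubgroup M where
  carrier := Set.range fun m : M => c • m
  add_mem' := by
    rintro _ _ ⟨x, rfl⟩ ⟨y, rfl⟩
    exact ⟨x + y, by simp [smul_add]⟩
  zero_mem' := ⟨0, smul_zero c⟩
  neg_mem' := by
    rintro _ ⟨x, rfl⟩
    exact ⟨-x, by simp⟩

/-- The additive subgroup `{m ∈ M | c • m = 0}`, the kernel of left multiplication
by `c` on `M`. -/
def smulKer {A : Type*} [Ring A] (c : A) (M : Type*) [AddCommGroup M] [Module A M] :
    AddSubgroup M where
  carrier := {m : M | c • m = 0}
  add_mem' := by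
    intro x y hx hy
    simp only [Set.mem_setOf_eq] at *
    rw [smul_add, hx, hy, add_zero]
  zero_mem' := by simp
  neg_mem' := by
    intro x hx
    simp only [Set.mem_setOf_eq] at *
    rw [smul_neg, hx, neg_zero]

/-- With `e' = 1 - aʳ*a`: for every left `A`-module `M`, (1) the set
`e'M = {e' • m}` equals the kernel `{m | a • m = 0}` of left multiplication by `a`; and
(2) the map `m ↦ e' • m` induces an isomorphism of abelian groups
`M/(aʳ•M) ≅ {m | a • m = 0}`. -/
theorem breaking_kernel_cokernel (A : Type*) [Ring A] (e₀ e₁ a ar : A)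
    (he₀ : IsIdempotentElem e₀) (he₁ : IsIdempotentElem e₁)
    (h₀₁ : e₀ * e₁ = 0) (h₁₀ : e₁ * e₀ = 0)
    (ha : a = e₁ * a * e₀) (har : ar = e₀ * ar * e₁) (haar : a * ar = e₁)
    (M : Type*) [AddCommGroup M] [Module A M] :
    (Set.range (fun m : M => (1 - ar * a) • m) = {m : M | a • m = 0}) ∧
    ∃ φ : (M ⧸ smulRange ar M) ≃+ smulKer a M,
      ∀ m : M, (φ (QuotientAddGroup.mk m) : M) = (1 - ar * a) • m := by
  have h1 : e₁ * a = a := by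
    rw [ha, ← mul_assoc, ← mul_assoc, he₁.eq]
  have h2 : ar * e₁ = ar := by
    rw [har, mul_assoc, he₁.eq]
  have h3 : a * (1 - ar * a) = 0 := by
    rw [mul_sub, mul_one, ← mul_assoc, haar, h1, sub_self]
  have h4 : (1 - ar * a) * ar = 0 := by
    rw [sub_mul, one_mul, mul_assoc, haar, h2, sub_self]
  have h5 : ∀ m : M, a • m = 0 → (1 - ar * a) • m = m := by
    intro m hm
    rw [sub_smul, one_smul, mul_smul, hm, smul_zero, sub_zero]
  have h6 : ∀ m : M, a • ((1 - ar * a) • m) = 0 := by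
    intro m
    rw [← mul_smul, h3, zero_smul]
  refine ⟨?_, ?_⟩
  · ext m
    constructor
    · rintro ⟨x, rfl⟩
      exact h6 x
    · intro hm
      exact ⟨m, h5 m hm⟩
  · let f : M →+ smulKer a M :=
      { toFun := fun m => ⟨(1 - ar * a) • m, h6 m⟩
        map_zero' := Subtype.ext (smul_zero _)
        map_add' := fun x y => Subtype.ext (smul_add _ x y) }
    have hf : ∀ m, (f m : M) = (1 - ar * a) • m := fun _ => rfl
    have hle : smulRange ar M ≤ f.ker := by
      rintro _ ⟨x, rfl⟩
      apply Subtype.ext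
      change (1 - ar * a) • (ar • x) = 0
      rw [← mul_smul, h4, zero_smul]
    refine ⟨AddEquiv.ofBijective (QuotientAddGroup.lift (smulRange ar M) f hle) ⟨?_, ?_⟩, ?_⟩
    · rw [injective_iff_map_eq_zero]
      intro q
      induction q using QuotientAddGroup.induction_on with
      | H m =>
        intro hm
        have hm' : (1 - ar * a) • m = 0 := congrArg Subtype.val hm
        rw [QuotientAddGroup.eq_zero_iff]
        refine ⟨a • m, ?_⟩
        rw [sub_smul, one_smul, sub_eq_zero, mul_smul] at hm'
        exact hm'.symm
    · rintro ⟨m, hm⟩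
      exact ⟨QuotientAddGroup.mk m, Subtype.ext (h5 m hm)⟩
    · intro m
      rfl
end

section
/- Let k be a commutative ring, let A and B be associative k-algebras, and let P be a finitely generated projective left A-module. Then there is an isomorphism of k-algebras End_{B⊗ₖA}(B ⊗ₖ P) ≅ Bᵒᵖ ⊗ₖ End_A(P), where B ⊗ₖ P is a left B⊗ₖA-module via (b⊗x)·(b'⊗p) = (b·b') ⊗ (x·p); explicitly, an endomorphism φ corresponds to Σⱼ bⱼᵒᵖ ⊗ fⱼ precisely when φ(1⊗p) = Σⱼ bⱼ ⊗ fⱼ(p) for all p ∈ P. -/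
open scoped TensorProduct

section Aux

variable {k A B P : Type*} [CommRing k] [Ring A] [Ring B]
    [Algebra k A] [Algebra k B]
    [AddCommGroup P] [Module A P] [Module k P] [IsScalarTower k A P] [SMulCommClass A k P]
    [Module (B ⊗[k] A) (B ⊗[k] P)]

/-- The endomorphism `b' ⊗ p ↦ b' b ⊗ f p`. -/
noncomputable def etpMap
    (hact : ∀ (b : B) (x : A) (b' : B) (p : P),
      (b ⊗ₜ[k] x : B ⊗[k] A) • (b' ⊗ₜ[k] p : B ⊗[k] P) = (b * b') ⊗ₜ[k] (x • p))
    (b : B) (f : Module.End A P) : Module.End (B ⊗[k] A) (B ⊗[k] P) where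
  toFun := TensorProduct.map (LinearMap.mulRight k b) (f.restrictScalars k)
  map_add' := map_add _
  map_smul' := by
    intro s t
    simp only [RingHom.id_apply]
    induction s with
    | zero => simp
    | add s s' h h' => simp only [add_smul, map_add, h, h']
    | tmul c x =>
      induction t with
      | zero => simp
      | add s s' h h' => simp only [smul_add, map_add, h, h']
      | tmul c' p => simp [hact, mul_assoc]

lemma etpMap_tmul
    (hact : ∀ (b : B) (x : A) (b' : B) (p : P),
      (b ⊗ₜ[k] x : B ⊗[k] A) • (b' ⊗ₜ[k] p : B ⊗[k] P) = (b * b') ⊗ₜ[k] (x • p))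
    (b : B) (f : Module.End A P) (b' : B) (p : P) :
    etpMap hact b f (b' ⊗ₜ[k] p) = (b' * b) ⊗ₜ[k] f p := by
  simp [etpMap]

lemma etp_ext
    (hact : ∀ (b : B) (x : A) (b' : B) (p : P),
      (b ⊗ₜ[k] x : B ⊗[k] A) • (b' ⊗ₜ[k] p : B ⊗[k] P) = (b * b') ⊗ₜ[k] (x • p))
    {f g : Module.End (B ⊗[k] A) (B ⊗[k] P)}
    (h : ∀ p : P, f ((1 : B) ⊗ₜ[k] p) = g ((1 : B) ⊗ₜ[k] p)) : f = g := by
  ext t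
  induction t with
  | zero => simp
  | add s s' h h' => simp only [map_add, h, h']
  | tmul b p =>
    have e : (b ⊗ₜ[k] p : B ⊗[k] P) = (b ⊗ₜ[k] (1 : A) : B ⊗[k] A) • ((1 : B) ⊗ₜ[k] p) := by
      rw [hact, mul_one, one_smul]
    rw [e, map_smul, map_smul, h]

/-- The algebra map `Bᵒᵖ ⊗ End_A P → End (B ⊗ P)`. -/
noncomputable def etpHom
    [SMulCommClass (B ⊗[k] A) k (B ⊗[k] P)]
    [IsScalarTower k (B ⊗[k] A) (B ⊗[k] P)]
    (hact : ∀ (b : B) (x : A) (b' : B) (p : P),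
      (b ⊗ₜ[k] x : B ⊗[k] A) • (b' ⊗ₜ[k] p : B ⊗[k] P) = (b * b') ⊗ₜ[k] (x • p)) :
    (Bᵐᵒᵖ ⊗[k] Module.End A P) →ₐ[k] Module.End (B ⊗[k] A) (B ⊗[k] P) :=
  Algebra.TensorProduct.lift
    (AlgHom.ofLinearMap
      { toFun := fun b => etpMap hact b.unop 1
        map_add' := fun b c => etp_ext hact fun p => by
          simp [etpMap_tmul, TensorProduct.add_tmul]
        map_smul' := fun r c => etp_ext hact fun p => by
          simp [etpMap_tmul, TensorProduct.smul_tmul'] }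
      (etp_ext hact fun p => by simp [etpMap_tmul])
      (fun b c => etp_ext hact fun p => by simp [etpMap_tmul]))
    (AlgHom.ofLinearMap
      { toFun := fun f => etpMap hact 1 f
        map_add' := fun b c => etp_ext hact fun p => by
          simp [etpMap_tmul, TensorProduct.tmul_add]
        map_smul' := fun r c => etp_ext hact fun p => by
          simp [etpMap_tmul] }
      (etp_ext hact fun p => by simp [etpMap_tmul])
      (fun b c => etp_ext hact fun p => by simp [etpMap_tmul]))
    (fun b f => etp_ext hact fun p => by simp [etpMap_tmul])

lemma etpHom_tmul
    [SMulCommClass (B ⊗[k] A) k (B ⊗[k] P)]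
    [IsScalarTower k (B ⊗[k] A) (B ⊗[k] P)]
    (hact : ∀ (b : B) (x : A) (b' : B) (p : P),
      (b ⊗ₜ[k] x : B ⊗[k] A) • (b' ⊗ₜ[k] p : B ⊗[k] P) = (b * b') ⊗ₜ[k] (x • p))
    (b : Bᵐᵒᵖ) (f : Module.End A P) (p : P) :
    etpHom hact (b ⊗ₜ[k] f) ((1 : B) ⊗ₜ[k] p) = b.unop ⊗ₜ[k] f p := by
  have h : etpHom hact (b ⊗ₜ[k] f) = etpMap hact b.unop 1 * etpMap hact 1 f :=
    Algebra.TensorProduct.lift_tmul _ _ _ _ _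
  rw [h, Module.End.mul_apply, etpMap_tmul, etpMap_tmul]
  simp

/-- The map `q ↦ (p ↦ c p • q)`. -/
def etpT (k : Type*) {A P : Type*} [CommRing k] [Ring A] [Algebra k A]
    [AddCommGroup P] [Module A P] [Module k P] [IsScalarTower k A P] [SMulCommClass A k P]
    (c : P →ₗ[A] A) : P →ₗ[k] Module.End A P where
  toFun q := c.smulRight q
  map_add' q q' := by ext p; simp
  map_smul' r q := by ext p; exact smul_comm _ _ _

lemma etpHom_bijective
    [Module.Finite A P] [Module.Projective A P]
    [SMulCommClass (B ⊗[k] A) k (B ⊗[k] P)]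
    [IsScalarTower k (B ⊗[k] A) (B ⊗[k] P)]
    (hact : ∀ (b : B) (x : A) (b' : B) (p : P),
      (b ⊗ₜ[k] x : B ⊗[k] A) • (b' ⊗ₜ[k] p : B ⊗[k] P) = (b * b') ⊗ₜ[k] (x • p)) :
    Function.Bijective (etpHom hact) := by
  obtain ⟨n, f, g, -, -, hfg⟩ := Module.Finite.exists_comp_eq_id_of_projective A P
  let c : Fin n → P →ₗ[A] A := fun i => LinearMap.proj i ∘ₗ g
  let e : Fin n → P := fun i => f (Pi.single i 1)
  have hce : ∀ p, ∑ i, c i p • e i = p := by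
    intro p
    have h1 : f (g p) = p := LinearMap.congr_fun hfg p
    conv_rhs => rw [← h1, pi_eq_sum_univ' (g p), map_sum]
    refine Finset.sum_congr rfl fun i _ => ?_
    rw [map_smul]
    simp only [c, e, LinearMap.comp_apply, LinearMap.proj_apply]
  let G : Fin n → (B ⊗[k] P) →ₗ[k] (Bᵐᵒᵖ ⊗[k] Module.End A P) := fun i =>
    TensorProduct.map (MulOpposite.opLinearEquiv k).toLinearMap (etpT k (c i))
  let inv : Module.End (B ⊗[k] A) (B ⊗[k] P) → Bᵐᵒᵖ ⊗[k] Module.End A P :=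
    fun ψ => ∑ i, G i (ψ ((1 : B) ⊗ₜ[k] e i))
  refine Function.bijective_iff_has_inverse.2 ⟨inv, ?_, ?_⟩
  · intro x
    simp only [inv]
    induction x with
    | zero => simp
    | add x y hx hy =>
      simp only [map_add, LinearMap.add_apply, Finset.sum_add_distrib, hx, hy]
    | tmul b h =>
      simp only [etpHom_tmul, G, TensorProduct.map_tmul]
      rw [← TensorProduct.tmul_sum]
      congr 1
      ext p
      simp only [LinearMap.sum_apply]
      conv_rhs => rw [← hce p, map_sum]
      exact Finset.sum_congr rfl fun i _ => by simp [etpT]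
  · intro ψ
    refine etp_ext hact fun p => ?_
    have key : ∀ i (t : B ⊗[k] P), etpHom hact (G i t) ((1 : B) ⊗ₜ[k] p)
        = ((1 : B) ⊗ₜ[k] c i p : B ⊗[k] A) • t := by
      intro i t
      induction t with
      | zero => simp
      | add x y hx hy => simp only [map_add, LinearMap.add_apply, smul_add, hx, hy]
      | tmul b q =>
        simp only [G, TensorProduct.map_tmul, etpHom_tmul, hact]
        simp [etpT]
    simp only [inv, map_sum, LinearMap.sum_apply, key]
    conv_rhs => rw [← hce p, TensorProduct.tmul_sum, map_sum]
    refine Finset.sum_congr rfl fun i _ => ?_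
    rw [← map_smul, hact, mul_one]

end Aux

/-- For a commutative ring `k`, `k`-algebras `A` and `B`, and a finitely generated
projective left `A`-module `P`, there is a `k`-algebra isomorphism
`End_{B⊗ₖA}(B ⊗ₖ P) ≅ Bᵒᵖ ⊗ₖ End_A(P)`, where `B ⊗ₖ P` is a `B⊗ₖA`-module via
`(b ⊗ x) • (b' ⊗ p) = (b*b') ⊗ (x • p)`; explicitly, `φ ψ = Σⱼ bⱼᵒᵖ ⊗ fⱼ` precisely when
`ψ (1 ⊗ p) = Σⱼ bⱼ ⊗ fⱼ p` for all `p ∈ P`. -/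
theorem end_tensor_projective (k A B P : Type*) [CommRing k] [Ring A] [Ring B]
    [Algebra k A] [Algebra k B]
    [AddCommGroup P] [Module A P] [Module k P] [IsScalarTower k A P] [SMulCommClass A k P]
    [Module.Finite A P] [Module.Projective A P]
    [Module (B ⊗[k] A) (B ⊗[k] P)]
    [SMulCommClass (B ⊗[k] A) k (B ⊗[k] P)]
    [IsScalarTower k (B ⊗[k] A) (B ⊗[k] P)]
    (hact : ∀ (b : B) (x : A) (b' : B) (p : P),
      (b ⊗ₜ[k] x : B ⊗[k] A) • (b' ⊗ₜ[k] p : B ⊗[k] P) = (b * b') ⊗ₜ[k] (x • p)) :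
    ∃ φ : Module.End (B ⊗[k] A) (B ⊗[k] P) ≃ₐ[k] (Bᵐᵒᵖ ⊗[k] Module.End A P),
      ∀ (ψ : Module.End (B ⊗[k] A) (B ⊗[k] P)) (m : ℕ) (b : Fin m → B)
        (f : Fin m → Module.End A P),
        (φ ψ = ∑ j, MulOpposite.op (b j) ⊗ₜ[k] f j) ↔
          ∀ p : P, ψ ((1 : B) ⊗ₜ[k] p) = ∑ j, (b j) ⊗ₜ[k] (f j p) := by
  refine ⟨(AlgEquiv.ofBijective (etpHom hact) (etpHom_bijective hact)).symm, ?_⟩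
  intro ψ m b f
  rw [AlgEquiv.symm_apply_eq, AlgEquiv.ofBijective_apply]
  have h : ∀ p : P, etpHom hact (∑ j, MulOpposite.op (b j) ⊗ₜ[k] f j) ((1 : B) ⊗ₜ[k] p)
      = ∑ j, (b j) ⊗ₜ[k] (f j p) := by
    intro p
    simp only [map_sum, LinearMap.sum_apply, etpHom_tmul, MulOpposite.unop_op]
  constructor
  · intro e p
    rw [e, h]
  · intro e
    exact etp_ext hact fun p => by rw [e, h]
end

section
/- Fix n ≥ 1 and a commutative ring R. For 1 ≤ m ≤ n−1 let U_m denote the n×n matrix over R equal to the identity matrix plus the matrix unit E_{m,m+1} (the matrix with a single 1 in position (m, m+1)). Then the ordered product (U_1·U_2·⋯·U_{n−1})·(U_1·U_2·⋯·U_{n−2})·⋯·(U_1·U_2)·(U_1) equals the upper-triangular matrix T with entries T_{ij} = binomial(n−i, j−i) for 1 ≤ i ≤ j ≤ n and T_{ij} = 0 for j < i. (For example, for n = 3 the product (U_1U_2)·U_1 equals the matrix with rows (1,2,1), (0,1,1), (0,0,1).) -/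
def auxN (R : Type*) [CommRing R] (n k q : ℕ) : Matrix (Fin n) (Fin n) R :=
  Matrix.of (fun i j : Fin n =>
    if i ≤ j then
      ((((if (i : ℕ) < q then k else k + 1) - (i : ℕ)).choose ((j : ℕ) - (i : ℕ)) : ℕ) : R)
    else 0)

theorem auxN_step (R : Type*) [CommRing R] (n k q : ℕ) (hq : q ≤ k) (hk : k + 1 < n)
    (U : Matrix (Fin n) (Fin n) R)
    (hU : U = 1 + Matrix.of fun i j : Fin n =>
      if (i : ℕ) = q ∧ (j : ℕ) = q + 1 then 1 else 0) :
    U * auxN R n k (q + 1) = auxN R n k q := by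
  subst hU
  ext i j
  rw [add_mul, one_mul, Matrix.add_apply, Matrix.mul_apply]
  by_cases hi : (i : ℕ) = q
  · rw [Finset.sum_eq_single (⟨q + 1, by omega⟩ : Fin n)]
    · simp only [auxN, Matrix.of_apply, hi, Fin.le_def]
      simp only [lt_irrefl, if_false, if_true, and_self, one_mul, Nat.lt_succ_self]
      rcases lt_trichotomy (j : ℕ) q with h | h | h
      · rw [if_neg (by omega), if_neg (by omega), if_neg (by omega), add_zero]
      · rw [if_pos (by omega), if_neg (by omega), if_pos (by omega), h]
        simp
      · rw [if_pos (by omega), if_pos (by omega), if_pos (by omega)]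
        obtain ⟨d, hd⟩ : ∃ d, (j : ℕ) = q + 1 + d := ⟨j - (q + 1), by omega⟩
        rw [hd, show q + 1 + d - q = d + 1 by omega, show q + 1 + d - (q + 1) = d by omega,
          show k + 1 - (q + 1) = k - q by omega, show k + 1 - q = (k - q) + 1 by omega,
          Nat.choose_succ_succ]
        push_cast
        ring
    · intro b _ hb
      have : (b : ℕ) ≠ q + 1 := fun h => hb (Fin.ext h)
      simp [this]
    · simp
  · have : ((i : ℕ) ≤ q) ↔ (i : ℕ) < q := by omega
    simp [auxN, hi, this]

theorem auxN_prod (R : Type*) [CommRing R] (n k : ℕ) (hk : k + 1 < n)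
    (U : ℕ → Matrix (Fin n) (Fin n) R)
    (hU : ∀ p, U p = 1 + Matrix.of fun i j : Fin n =>
      if (i : ℕ) = p ∧ (j : ℕ) = p + 1 then 1 else 0) (q : ℕ) (hq : q ≤ k + 1) :
    ((List.range q).map fun p => U p).prod * auxN R n k q = auxN R n k 0 := by
  induction q with
  | zero => simp
  | succ q ih =>
    rw [List.range_succ, List.map_append, List.prod_append, mul_assoc]
    simp only [List.map_cons, List.map_nil, List.prod_cons, List.prod_nil, mul_one]
    rw [auxN_step R n k q (by omega) hk (U q) (hU q)]
    exact ih (by omega)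

theorem auxN_full (R : Type*) [CommRing R] (n : ℕ)
    (U : ℕ → Matrix (Fin n) (Fin n) R)
    (hU : ∀ p, U p = 1 + Matrix.of fun i j : Fin n =>
      if (i : ℕ) = p ∧ (j : ℕ) = p + 1 then 1 else 0) (k : ℕ) (hk : k < n) :
    (((List.range k).reverse.map fun s =>
        (((List.range (s + 1)).map fun p => U p).prod)).prod) =
      Matrix.of (fun i j : Fin n =>
        if i ≤ j then (((k - (i : ℕ)).choose ((j : ℕ) - (i : ℕ)) : ℕ) : R) else 0) := by
  induction k with
  | zero =>
    ext i j
    simp only [List.range_zero, List.reverse_nil, List.map_nil, List.prod_nil, Matrix.one_apply,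
      Matrix.of_apply, Fin.le_def, Fin.ext_iff, Nat.zero_sub]
    rcases lt_trichotomy (i : ℕ) j with h | h | h
    · rw [if_neg (by omega), if_pos (by omega), Nat.choose_eq_zero_of_lt (by omega)]
      simp
    · simp [h]
    · rw [if_neg (by omega), if_neg (by omega)]
  | succ k ih =>
    rw [List.range_succ, List.reverse_append, List.reverse_singleton, List.singleton_append,
      List.map_cons, List.prod_cons, ih (by omega)]
    have h1 := auxN_prod R n k hk U hU (k + 1) le_rfl
    have h2 : auxN R n k (k + 1) = Matrix.of (fun i j : Fin n =>
        if i ≤ j then (((k - (i : ℕ)).choose ((j : ℕ) - (i : ℕ)) : ℕ) : R) else 0) := by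
      ext i j
      simp only [auxN, Matrix.of_apply]
      by_cases h : (i : ℕ) < k + 1
      · rw [if_pos h]
      · rw [if_neg h, show k + 1 - (i : ℕ) = k - i by omega]
    rw [h2] at h1
    rw [h1]
    ext i j
    simp [auxN]

/-- For `1 ≤ m ≤ n-1` let `U m` be the `n × n` identity matrix plus the matrix unit
`E_{m,m+1}` (here written 0-indexed: `U' p = 1 + E_{p,p+1}` for `0 ≤ p ≤ n-2`, with
`U' p = U (p+1)`). Then the ordered product
`(U 1 ⋯ U (n-1)) * (U 1 ⋯ U (n-2)) * ⋯ * (U 1 * U 2) * (U 1)`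
equals the upper-triangular matrix `T` with entries `T i j = (n - i).choose (j - i)`
for `i ≤ j` (1-indexed; here 0-indexed: `T i j = (n - 1 - i).choose (j - i)`),
and `T i j = 0` for `j < i`. -/
theorem elementary_product_eq_binomial_matrix (R : Type*) [CommRing R] (n : ℕ) (hn : 1 ≤ n)
    (U : ℕ → Matrix (Fin n) (Fin n) R)
    (hU : ∀ p, U p = 1 + Matrix.of fun i j : Fin n =>
      if (i : ℕ) = p ∧ (j : ℕ) = p + 1 then 1 else 0) :
    (((List.range (n - 1)).reverse.map fun s =>
        (((List.range (s + 1)).map fun p => U p).prod)).prod) =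
      Matrix.of (fun i j : Fin n =>
        if i ≤ j then (((n - 1 - (i : ℕ)).choose ((j : ℕ) - (i : ℕ)) : ℕ) : R) else 0) := by
  exact auxN_full R n U hU (n - 1) (by omega)
end
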